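/- For all natural numbers p, q with p < q < 2p − ⌊|p−2|/2⌋ (an inequality of integers), one has f(p,q) = F(p,q). -/

import Mathlib

/-!
The proof determines `f` everywhere, not only in the range of the theorem: `f p p = 1`, and for
`p ≠ q` one has `f p q = 2 * half p q`, where `half p q = min (min p q) (cap (p + q))` and
`cap s = ⌊2 (s - 1) / 5⌋`, except that `cap 3 = 1` (which accounts for `f 1 2 = f 2 1 = 2`). In the
range of the theorem the minimum is `cap (p + q)`, and `2 * cap (p + q) = F p q`.

The closed form is proved by strong induction. On the diagonal, an option is either `1 ⊕ 1 = 0` or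
a sum of two even numbers, so `1` is never an option. For `p < q` the options split by parity.

* Odd options come from splitting off a diagonal position `(a, a)`, and have the form
  `2 * half c (c + k) + 1` with `k = q - p` and `c < p`. Since `c ↦ half c (c + k)` starts at `0`
  and grows by at most `1` per step, every odd number below `2 * half p q` occurs
  (`exists_diag`).
* Even options are `2 * (half a b ⊕ half c d)`. They vanish if the two halves agree;
  otherwise `x ⊕ y ≤ x + y` and the bound `half a b + half c d < half p q` put them below
  `2 * half p q` (`half_add_lt`). Conversely `0`
  comes from `h`, and splitting off a position of value `0` with an empty side reaches every
  `2 * v`, `v < half p q`, by the same step-by-step argument, with one exception: if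
  `p + q = 5 k + 1` and `v = 2 k - 1`, one uses `v = (2 k - 2) ⊕ 1`, the `1` being contributed by a
  position `(1, 2)` or `(2, 1)` (`exists_even`).
-/

/-- `mex S` is the least natural number not belonging to `S`. -/
noncomputable def mex (S : Set ℕ) : ℕ := sInf {n : ℕ | n ∉ S}

/-- `h 0 = 0` and `h n = 1` for all `n ≥ 1`. -/
def h : ℕ → ℕ
  | 0 => 0
  | _ + 1 => 1

/-- The nimber of the Circular sprout game `CS₄(𝒫₄ : p,1,q,1)`, defined by strong
recursion: `f p q` is the mex of the set consisting of `h p ^^^ h q` together with all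
values `f p' q' ^^^ f (p-1-p') (q-1-q')` for `0 ≤ p' ≤ p-1` and `0 ≤ q' ≤ q-1`. -/
noncomputable def f (p q : ℕ) : ℕ :=
  mex ({h p ^^^ h q} ∪
    ⋃ (p' : ℕ) (_ : p' < p) (q' : ℕ) (_ : q' < q),
      {f p' q' ^^^ f (p - 1 - p') (q - 1 - q')})
termination_by p
decreasing_by
  · omega
  · omega

/-- `idx p q` is the unique element of `{1,2,3,4,5}` congruent to `p + q` modulo `5`. -/
def idx (p q : ℕ) : ℕ := if (p + q) % 5 = 0 then 5 else (p + q) % 5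

/-- `F p q = (4/5)·(p + q − idx p q) + 2·⌊idx p q / 4⌋`. -/
def F (p q : ℕ) : ℕ := 4 * ((p + q - idx p q) / 5) + 2 * (idx p q / 4)

theorem mex_eq {S : Set ℕ} {n : ℕ} (hn : n ∉ S) (hlt : ∀ m < n, m ∈ S) : mex S = n := by
  apply le_antisymm
  · exact Nat.sInf_le hn
  · by_contra hc
    push Not at hc
    have hmem : mex S ∈ {n : ℕ | n ∉ S} := Nat.sInf_mem ⟨n, hn⟩
    exact hmem (hlt _ hc)

/-- The bound on half the nimber of an off-diagonal position that depends only on `s = p + q`: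
`⌊2 (s - 1) / 5⌋`, corrected at `s = 3`. -/
def cap (s : ℕ) : ℕ := if s = 3 then 1 else 2 * (s - 1) / 5

/-- Half of the nimber `f p q` of an off-diagonal position. -/
def half (p q : ℕ) : ℕ := min (min p q) (cap (p + q))

/-- The closed form of `f`. -/
def val (p q : ℕ) : ℕ := if p = q then 1 else 2 * half p q

theorem half_comm (p q : ℕ) : half p q = half q p := by
  simp only [half, Nat.add_comm, Nat.min_comm]

theorem val_comm (p q : ℕ) : val p q = val q p := by
  simp only [val, half_comm p q, eq_comm]

theorem two_xor_two (a b : ℕ) : (2 * a) ^^^ (2 * b) = 2 * (a ^^^ b) := by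
  have := Nat.shiftLeft_xor_distrib (a := a) (b := b) (i := 1)
  simp only [Nat.shiftLeft_eq, pow_one] at this
  rw [Nat.mul_comm 2 a, Nat.mul_comm 2 b, ← this, Nat.mul_comm]

theorem one_xor_two_mul (a : ℕ) : 1 ^^^ (2 * a) = 2 * a + 1 := by
  have h1 : (1 ^^^ (2 * a)) / 2 = a := by simp [Nat.xor_div_two]
  have h2 : (1 ^^^ (2 * a)) % 2 = 1 := by simp
  omega

theorem xor_le_add (a b : ℕ) : a ^^^ b ≤ a + b := by
  induction a using Nat.strong_induction_on generalizing b with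
  | _ a ih =>
    rcases Nat.eq_zero_or_pos a with rfl | ha
    · simp
    · have h1 := ih (a / 2) (by omega) (b / 2)
      rw [← Nat.xor_div_two] at h1
      have h2 : (a ^^^ b) % 2 = (a + b) % 2 := Nat.xor_mod_two_eq
      omega

/-- Discrete intermediate value theorem. -/
theorem exists_eq_of_step (φ : ℕ → ℕ) (h0 : φ 0 = 0) (hs : ∀ n, φ (n + 1) ≤ φ n + 1) (n v : ℕ)
    (hv : v ≤ φ n) : ∃ m ≤ n, φ m = v := by
  induction n with
  | zero => exact ⟨0, le_rfl, by omega⟩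
  | succ n ih =>
    by_cases hc : v ≤ φ n
    · obtain ⟨m, hm, e⟩ := ih hc
      exact ⟨m, by omega, e⟩
    · have := hs n
      exact ⟨n + 1, le_rfl, by omega⟩

/-- A split of an off-diagonal position into two off-diagonal ones never has value `2 * half p q`.
The second alternative is needed because the sum of the two halves can reach `half p q` when they
are equal: `half 1 2 + half 1 2 = 2 = half 3 5`. -/
theorem half_add_lt {p q a b c d : ℕ} (hp : a + c + 1 = p) (hq : b + d + 1 = q) (hab : a ≠ b)
    (hcd : c ≠ d) (hpq : p ≠ q) : half a b ^^^ half c d < half p q ∨ half a b ^^^ half c d = 0 := by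
  have hle := xor_le_add (half a b) (half c d)
  by_cases he : half a b = half c d
  · right; rw [he, Nat.xor_self]
  · left
    refine lt_of_le_of_lt hle ?_
    simp only [half, cap] at *
    split_ifs at * <;> omega

theorem exists_diag {p q v : ℕ} (hpq : p < q) (hv : v < half p q) :
    ∃ c < p, half c (c + (q - p)) = v := by
  have hp : 0 < p := by
    simp only [half] at hv
    omega
  have hstep := exists_eq_of_step (fun c => half c (c + (q - p))) (by simp [half]) (by
    intro n
    simp only [half, cap]
    split_ifs <;> omega) (p - 1) v (by
      simp only [half, cap] at *
      split_ifs at * <;> omega)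
  obtain ⟨m, hm, e⟩ := hstep
  exact ⟨m, by omega, e⟩

theorem exists_even {p q v : ℕ} (hpq : p < q) (hv0 : 0 < v) (hv : v < half p q) :
    ∃ a b c d, a + c + 1 = p ∧ b + d + 1 = q ∧ a ≠ b ∧ c ≠ d ∧ half a b ^^^ half c d = v := by
  by_cases hex : (p + q) % 5 = 1 ∧ v + 1 = cap (p + q)
  · obtain ⟨h5, hvc⟩ := hex
    have hodd : 1 ^^^ (v - 1) = v := by
      have h1 := one_xor_two_mul ((v - 1) / 2)
      have h2 : 2 * ((v - 1) / 2) = v - 1 := by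
        simp only [cap] at hvc
        split_ifs at hvc <;> omega
      rw [h2] at h1
      omega
    by_cases hq : q = p + 1
    · -- here `(p - 2, q - 3)` would lie on the diagonal, so `(2, 1)` is split off
      have hb : half (p - 3) (q - 2) = v - 1 := by
        simp only [half, cap] at *
        split_ifs at * <;> omega
      have hp : 5 ≤ p := by
        simp only [half, cap] at *
        split_ifs at * <;> omega
      refine ⟨2, 1, p - 3, q - 2, by omega, by omega, by omega, by omega, ?_⟩
      rw [hb, show half 2 1 = 1 by decide, hodd]
    · have hb : half (p - 2) (q - 3) = v - 1 := by
        simp only [half, cap] at *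
        split_ifs at * <;> omega
      have hp : 2 ≤ p := by
        simp only [half, cap] at *
        split_ifs at * <;> omega
      refine ⟨1, 2, p - 2, q - 3, by omega, by omega, by omega, by omega, ?_⟩
      rw [hb, show half 1 2 = 1 by decide, hodd]
  · -- outside the exceptional case, splitting off `(0, 1)` or `(1, 0)` leaves enough room
    have hcap : v ≤ cap (p + q - 3) := by
      have hvs : v < cap (p + q) := lt_of_lt_of_le hv (min_le_right _ _)
      obtain ⟨k, r, hr, hk⟩ : ∃ k r, r < 5 ∧ p + q = 5 * k + r :=
        ⟨(p + q) / 5, (p + q) % 5, by omega, by omega⟩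
      rw [hk] at hvs hex ⊢
      simp only [cap] at hvs hex ⊢
      interval_cases r <;> split_ifs at hvs hex ⊢ <;> omega
    clear hex
    by_cases hq : q = p + 1
    · -- fill the longer side completely: positions `(a, q - 1)` with `a ≤ p - 2`
      have hp : 2 ≤ p := by
        simp only [half] at hv
        omega
      obtain ⟨m, hm, e⟩ := exists_eq_of_step (fun a => half a (q - 1)) (by simp [half]) (by
        intro n
        simp only [half, cap]
        split_ifs <;> omega) (p - 2) v (by
          have hsum : p - 2 + (q - 1) = p + q - 3 := by omega
          simp only [half, hsum]
          refine le_min ?_ hcap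
          simp only [half, cap] at *
          split_ifs at * <;> omega)
      refine ⟨m, q - 1, p - 1 - m, 0, by omega, by omega, by omega, by omega, ?_⟩
      simpa [half] using e
    · -- positions `(p - 1, b)` with `b ≤ q - 2`, where `b` skips the diagonal value `p - 1`
      have hp : 2 ≤ p := by
        simp only [half] at hv
        omega
      obtain ⟨m, hm, e⟩ := exists_eq_of_step
        (fun b => half (p - 1) (if b < p - 1 then b else b + 1)) (by
          simp [half, show 0 < p - 1 by omega]) (by
        intro n
        simp only [half, cap]
        split_ifs <;> omega) (q - 3) v (by
          have hsum : p - 1 + (q - 3 + 1) = p + q - 3 := by omega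
          simp only [half, show ¬ q - 3 < p - 1 by omega, if_false, hsum]
          refine le_min ?_ hcap
          simp only [half] at hv
          omega)
      refine ⟨p - 1, if m < p - 1 then m else m + 1, 0, q - 1 - if m < p - 1 then m else m + 1,
        by omega, ?_, ?_, ?_, ?_⟩
      · split_ifs <;> omega
      · split_ifs <;> omega
      · split_ifs <;> omega
      · rw [e]
        simp [half]

theorem h_xor_h {p q : ℕ} : h p ^^^ h q = if (p = 0 ↔ q = 0) then 0 else 1 := by
  rcases p with _ | p <;> rcases q with _ | q <;> simp [h]

/-- The set of options in the recursion for `f`, with `val` in place of `f` and the two parts of a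
split treated symmetrically. -/
def optionSet (p q : ℕ) : Set ℕ :=
  {n | n = h p ^^^ h q ∨ ∃ a b c d, a + c + 1 = p ∧ b + d + 1 = q ∧ val a b ^^^ val c d = n}

theorem optionSet_comm (p q : ℕ) : optionSet p q = optionSet q p := by
  have key : ∀ p q, optionSet p q ⊆ optionSet q p := by
    rintro p q n (hn | ⟨a, b, c, d, hp, hq, e⟩)
    · left
      rw [hn, Nat.xor_comm]
    · right
      exact ⟨b, a, d, c, hq, hp, by rw [val_comm b a, val_comm d c, e]⟩
  exact Set.Subset.antisymm (key p q) (key q p)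

theorem mex_diag (p : ℕ) : mex (optionSet p p) = 1 := by
  apply mex_eq
  · rintro (hn | ⟨a, b, c, d, hp, hq, e⟩)
    · simp at hn
    · by_cases hab : a = b
      · have hcd : c = d := by omega
        simp [val, hab, hcd] at e
      · have hcd : c ≠ d := by omega
        simp only [val, hab, hcd, if_false, two_xor_two] at e
        omega
  · intro m hm
    left
    simp
    omega

theorem mex_off_diag {p q : ℕ} (hpq : p < q) : mex (optionSet p q) = 2 * half p q := by
  apply mex_eq
  · rintro (hn | ⟨a, b, c, d, hp, hq, e⟩)
    · rw [h_xor_h] at hn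
      simp only [half, cap] at hn
      split_ifs at hn <;> omega
    · by_cases hab : a = b
      · have hcd : c ≠ d := by omega
        simp only [val, hab, hcd, if_false, if_true, one_xor_two_mul] at e
        omega
      · by_cases hcd : c = d
        · rw [Nat.xor_comm] at e
          simp only [val, hab, hcd, if_false, if_true, one_xor_two_mul] at e
          omega
        · simp only [val, hab, hcd, if_false, two_xor_two] at e
          rcases half_add_lt hp hq hab hcd hpq.ne with hlt | h0
          · omega
          · have hpos : 0 < half p q := by
              simp only [half, cap]
              split_ifs <;> omega
            omega
  · intro m hm
    rcases Nat.even_or_odd' m with ⟨v, rfl | rfl⟩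
    · rcases Nat.eq_zero_or_pos v with rfl | hv
      · left
        have hp : 0 < p := by
          simp only [half] at hm
          omega
        rw [h_xor_h, if_pos (by omega)]
      · right
        obtain ⟨a, b, c, d, hp, hq, hab, hcd, e⟩ := exists_even hpq hv (by omega)
        exact ⟨a, b, c, d, hp, hq, by simp only [val, hab, hcd, if_false, two_xor_two, e]⟩
    · right
      obtain ⟨c, hc, e⟩ := exists_diag (v := v) hpq (by omega)
      refine ⟨p - 1 - c, p - 1 - c, c, c + (q - p), by omega, by omega, ?_⟩
      have hne : c ≠ c + (q - p) := by omega
      simp only [val, hne, if_false, if_true, e, one_xor_two_mul]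

theorem f_eq_val (p q : ℕ) : f p q = val p q := by
  induction p using Nat.strong_induction_on generalizing q with
  | _ p ih =>
    have hS : f p q = mex (optionSet p q) := by
      rw [f]
      congr 1
      ext n
      simp only [optionSet, Set.mem_union, Set.mem_singleton_iff, Set.mem_iUnion, Set.mem_ofPred_eq]
      refine or_congr Iff.rfl ⟨?_, ?_⟩
      · rintro ⟨a, ha, b, hb, e⟩
        rw [ih a ha, ih (p - 1 - a) (by omega)] at e
        exact ⟨a, b, p - 1 - a, q - 1 - b, by omega, by omega, e.symm⟩
      · rintro ⟨a, b, c, d, hp, hq, e⟩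
        refine ⟨a, by omega, b, by omega, ?_⟩
        rw [ih a (by omega), ih (p - 1 - a) (by omega), show p - 1 - a = c by omega,
          show q - 1 - b = d by omega, e]
    rw [hS]
    rcases lt_trichotomy p q with hlt | rfl | hgt
    · rw [mex_off_diag hlt, val, if_neg hlt.ne]
    · rw [mex_diag, val, if_pos rfl]
    · rw [optionSet_comm, mex_off_diag hgt, val, if_neg hgt.ne', half_comm]

theorem stmt6 (p q : ℕ) (hpq : p < q)
    (hq : (q : ℤ) < 2 * (p : ℤ) - |(p : ℤ) - 2| / 2) :
    f p q = F p q := by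
  rw [f_eq_val, val, if_neg hpq.ne]
  -- the upper bound on `q` excludes `p ≤ 1`, so the absolute value opens as `p - 2`
  have hp : 2 ≤ p := by
    have := abs_nonneg ((p : ℤ) - 2)
    omega
  have habs : |(p : ℤ) - 2| = (p : ℤ) - 2 := abs_of_nonneg (by omega)
  rw [habs] at hq
  have hF : F p q = 2 * cap (p + q) := by
    obtain ⟨k, r, hr, hk⟩ : ∃ k r, r < 5 ∧ p + q = 5 * k + r :=
      ⟨(p + q) / 5, (p + q) % 5, by omega, by omega⟩
    simp only [cap, F, idx, hk]
    interval_cases r <;> split_ifs <;> omega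
  rw [hF]
  simp only [half, cap]
  split_ifs <;> omega
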